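/- Let g be a balanced n-variable Boolean function, b ∈ F_2, and suppose there is an integer t ≥ 0 with t ≡ b (mod 2) such that g is plateaued and t-resilient but not (t+1)-resilient. Let g_b be the (n+1)-variable Boolean function g_b(X_{n+1}, X_n, …, X_1) = (1 ⊕ X_{n+1})·g(X_n, …, X_1) ⊕ X_{n+1}·(b ⊕ g(1⊕X_n, …, 1⊕X_1)), and let G_b = g_b ⋄ g. Then H_∞(G_b)/Inf(G_b) = (H_∞(g)/Inf(g)) · ((t+3)/(Inf(g) + ε_b(g))), where ε_b(g) = Σ_{α ∈ F_2^n : wt(α) ≢ b (mod 2)} W_g(α)². -/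

import Mathlib

open Finset

/-- Interpret a bit as a natural number. -/
def b2n (b : Bool) : ℕ := if b then 1 else 0

/-- Hamming weight of a vector in `F_2^ι`. -/
def bwt {ι : Type*} [Fintype ι] (α : ι → Bool) : ℕ :=
  (Finset.univ.filter fun i => α i = true).card

/-- Inner product `⟨v,w⟩ = v_1 w_1 ⊕ ⋯ ⊕ v_n w_n` over `F_2`. -/
def bip {ι : Type*} [Fintype ι] (v w : ι → Bool) : Bool :=
  decide ((∑ i, b2n (v i && w i)) % 2 = 1)

/-- Normalised Walsh transform of a Boolean function:
`W_f(α) = 2^{-n} Σ_x (-1)^{f(x) ⊕ ⟨x,α⟩}`. -/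
noncomputable def walsh {ι : Type*} [Fintype ι] [DecidableEq ι]
    (f : (ι → Bool) → Bool) (α : ι → Bool) : ℝ :=
  (2 ^ Fintype.card ι : ℝ)⁻¹ *
    ∑ x : ι → Bool, (-1 : ℝ) ^ (b2n (f x) + ∑ i, b2n (x i && α i))

/-- Fourier min-entropy `H_∞(f) = min_{α : W_f(α) ≠ 0} log₂ (1 / W_f(α)²)`. -/
noncomputable def minEntropy {ι : Type*} [Fintype ι] [DecidableEq ι]
    (f : (ι → Bool) → Bool) : ℝ :=
  sInf {y : ℝ | ∃ α : ι → Bool, walsh f α ≠ 0 ∧ y = Real.logb 2 (1 / (walsh f α) ^ 2)}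

/-- Fourier entropy `H(f) = Σ_{α : W_f(α) ≠ 0} W_f(α)² log₂ (1 / W_f(α)²)`. -/
noncomputable def fourierEntropy {ι : Type*} [Fintype ι] [DecidableEq ι]
    (f : (ι → Bool) → Bool) : ℝ :=
  ∑ α : ι → Bool,
    if walsh f α = 0 then 0
    else (walsh f α) ^ 2 * Real.logb 2 (1 / (walsh f α) ^ 2)

/-- Total influence `Inf(f) = Σ_i Pr_x [f(x) ≠ f(x ⊕ e_i)]`. -/
noncomputable def influence {ι : Type*} [Fintype ι] [DecidableEq ι]
    (f : (ι → Bool) → Bool) : ℝ :=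
  ∑ i : ι,
    ((Finset.univ.filter fun x : ι → Bool =>
       f x ≠ f (Function.update x i (!x i))).card : ℝ) / 2 ^ Fintype.card ι

/-- `f` is balanced if `|supp(f)| = 2^{n-1}`. -/
def balanced {ι : Type*} [Fintype ι] [DecidableEq ι] (f : (ι → Bool) → Bool) : Prop :=
  (Finset.univ.filter fun x : ι → Bool => f x = true).card = 2 ^ (Fintype.card ι - 1)

/-- Disjoint composition `(f ⋄ g)(x) = f(g(x^{(1)}), …, g(x^{(k)}))`, where the input in
`F_2^{k·l}` is viewed as `k` blocks of length `l`. -/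
def disjComp {ι κ : Type*} (f : (ι → Bool) → Bool) (g : (κ → Bool) → Bool) :
    (ι × κ → Bool) → Bool :=
  fun x => f fun i => g fun j => x (i, j)

/-- The palindromic-type construction
`g_b(X_{n+1}, X_n, …, X_1) = (1 ⊕ X_{n+1})·g(X_n,…,X_1) ⊕ X_{n+1}·(b ⊕ g(1⊕X_n,…,1⊕X_1))`,
where the extra variable `X_{n+1}` is placed at index `0`. -/
def palin {n : ℕ} (g : (Fin n → Bool) → Bool) (b : Bool) :
    (Fin (n + 1) → Bool) → Bool :=
  fun x => if x 0 = true then xor b (g fun i => !x i.succ) else g fun i => x i.succ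

/-- `ε_b(g) = Σ_{α : wt(α) ≢ b (mod 2)} W_g(α)²`. -/
noncomputable def eps {n : ℕ} (g : (Fin n → Bool) → Bool) (b : Bool) : ℝ :=
  ∑ α ∈ Finset.univ.filter fun α : Fin n → Bool => ¬bwt α % 2 = b2n b, (walsh g α) ^ 2

/-- `f` is `t`-resilient if `W_f(α) = 0` whenever `wt(α) ≤ t`. -/
def resilient {ι : Type*} [Fintype ι] [DecidableEq ι]
    (f : (ι → Bool) → Bool) (t : ℕ) : Prop :=
  ∀ α : ι → Bool, bwt α ≤ t → walsh f α = 0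

/-- `f` is plateaued if its Walsh transform takes values in `{0, c, -c}` for some `c`. -/
def plateaued {ι : Type*} [Fintype ι] [DecidableEq ι] (f : (ι → Bool) → Bool) : Prop :=
  ∃ c : ℝ, ∀ α : ι → Bool, walsh f α = 0 ∨ walsh f α = c ∨ walsh f α = -c

/-- `a_i = max_{w : wt(w) = i} W_f(w)²`. -/
noncomputable def maxWsqAt {ι : Type*} [Fintype ι] [DecidableEq ι]
    (f : (ι → Bool) → Bool) (i : ℕ) : ℝ :=
  sSup {z : ℝ | ∃ w : ι → Bool, bwt w = i ∧ z = (walsh f w) ^ 2}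

/-- Index type for the O'Donnell–Tan recursion: `f_m` is a function of `l^{m+1}` variables. -/
def OTIndex (l : ℕ) : ℕ → Type
  | 0 => Fin l
  | m + 1 => Fin l × OTIndex l m

instance OTIndex.instFintype (l : ℕ) : (m : ℕ) → Fintype (OTIndex l m)
  | 0 => inferInstanceAs (Fintype (Fin l))
  | m + 1 => letI := OTIndex.instFintype l m
             inferInstanceAs (Fintype (Fin l × OTIndex l m))

instance OTIndex.instDecidableEq (l : ℕ) : (m : ℕ) → DecidableEq (OTIndex l m)
  | 0 => inferInstanceAs (DecidableEq (Fin l))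
  | m + 1 => letI := OTIndex.instDecidableEq l m
             inferInstanceAs (DecidableEq (Fin l × OTIndex l m))

/-- The O'Donnell–Tan recursion `f_0 = g`, `f_m = g ⋄ f_{m-1}`. -/
def OTfun {l : ℕ} (g : (Fin l → Bool) → Bool) : (m : ℕ) → (OTIndex l m → Bool) → Bool
  | 0 => g
  | m + 1 => disjComp g (OTfun g m)

/-!
Write `G_b = palin g b ⋄ g`. Two facts on the Walsh spectrum carry the proof.

* `walsh_palin`: the coefficient of `palin g b` at `(a, α)` is `W_g(α)` if `a = b ⊕ wt(α) mod 2`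
  and `0` otherwise. With `Inf(f) = Σ wt(α) W_f(α)²` this gives
  `Inf(palin g b) = Inf(g) + ε_b(g)`. Moreover the support of the spectrum of `palin g b` has
  minimum weight `t + 2`, because the points of weight `t + 1` in the support of `W_g` have parity
  different from `b` and so acquire the extra bit.
* `walsh_disjComp_balanced`: if `W_g(0) = 0`, the coefficient of `f ⋄ g` at `α = (α₁, …, α_k)` is
  `W_f(β) ∏_{β_i = 1} W_g(α_i)`, where `β_i = [α_i ≠ 0]`. With Parseval's identity on each block,
  this makes the influence multiplicative (`influence_disjComp`).

When `W_g` takes values in `{0, ±c}`, every nonzero coefficient of `G_b` satisfies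
`W(α)² = (c²)^(1 + wt β)`, so that `H_∞(G_b)` is `1 + (t + 2)` times `log₂ (1/c²) = H_∞(g)`.
-/

/-! ### Fourier analysis on `F_2^ι` -/

/-- The sign `(-1)^b` of a bit. -/
def sgn (b : Bool) : ℝ := if b then -1 else 1

/-- The character `x ↦ (-1)^{⟨x,α⟩}` of `F_2^ι`. -/
def chi {ι : Type*} [Fintype ι] (x α : ι → Bool) : ℝ := ∏ i, sgn (x i && α i)

section general

variable {ι κ : Type*} [Fintype ι] [Fintype κ]

lemma neg_one_pow_b2n (b : Bool) : (-1 : ℝ) ^ b2n b = sgn b := by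
  cases b <;> simp [b2n, sgn]

lemma sgn_mul_self (b : Bool) : sgn b * sgn b = 1 := by
  cases b <;> simp [sgn]

lemma sgn_xor (a b : Bool) : sgn (xor a b) = sgn a * sgn b := by
  cases a <;> cases b <;> simp [sgn]

lemma chi_comm (x α : ι → Bool) : chi x α = chi α x := by
  simp only [chi, Bool.and_comm]

lemma chi_xor (x y α : ι → Bool) : chi (fun i => xor (x i) (y i)) α = chi x α * chi y α := by
  simp only [chi, ← Finset.prod_mul_distrib, ← sgn_xor]
  refine Finset.prod_congr rfl fun i _ => ?_
  congr 1
  cases x i <;> cases y i <;> cases α i <;> rfl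

lemma xor_eq_false_iff {σ : Type*} (x y : σ → Bool) :
    (fun i => xor (x i) (y i)) = (fun _ => false) ↔ x = y := by
  simp [funext_iff]

variable [DecidableEq ι] [DecidableEq κ]

lemma walsh_eq (f : (ι → Bool) → Bool) (α : ι → Bool) :
    walsh f α = (2 ^ Fintype.card ι : ℝ)⁻¹ * ∑ x, sgn (f x) * chi x α := by
  simp only [walsh, pow_add, chi, neg_one_pow_b2n,
    ← Finset.prod_pow_eq_pow_sum]

/-- Orthogonality of characters. -/
lemma sum_chi (z : ι → Bool) :
    ∑ α, chi z α = if z = fun _ => false then (2 ^ Fintype.card ι : ℝ) else 0 := by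
  have h : ∑ α, chi z α = ∏ i, ∑ a : Bool, sgn (z i && a) := by
    rw [Finset.prod_univ_sum, Fintype.piFinset_univ]
    rfl
  rw [h]
  split_ifs with hz
  · subst hz
    simp [sgn]
  · obtain ⟨i, hi⟩ := Function.ne_iff.mp hz
    refine Finset.prod_eq_zero (Finset.mem_univ i) ?_
    have : z i = true := by simpa using hi
    simp [this, sgn]

lemma walsh_false (α : ι → Bool) :
    walsh (fun _ => false) α = if α = fun _ => false then 1 else 0 := by
  have h : ∀ x, chi x α = chi α x := fun x => chi_comm x α
  simp only [walsh_eq, sgn, h]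
  simp only [Bool.false_eq_true, if_false, one_mul, sum_chi]
  split_ifs <;> simp

/-- Fourier inversion. -/
lemma walsh_inversion (f : (ι → Bool) → Bool) (y : ι → Bool) :
    sgn (f y) = ∑ β, walsh f β * chi y β := by
  have h : ∑ β, walsh f β * chi y β
      = (2 ^ Fintype.card ι : ℝ)⁻¹ *
        ∑ x, sgn (f x) * ∑ β, chi (fun i => xor (x i) (y i)) β := by
    simp only [walsh_eq, Finset.mul_sum, Finset.sum_mul, chi_xor]
    rw [Finset.sum_comm]
    refine Finset.sum_congr rfl fun x _ => Finset.sum_congr rfl fun β _ => by ring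
  rw [h]
  simp only [sum_chi, xor_eq_false_iff]
  simp
  field_simp

/-- Wiener–Khinchin: the autocorrelation of `f` is the Fourier transform of its power spectrum. -/
lemma sum_walsh_sq_chi (f : (ι → Bool) → Bool) (u : ι → Bool) :
    ∑ α, walsh f α ^ 2 * chi u α
      = (2 ^ Fintype.card ι : ℝ)⁻¹ * ∑ x, sgn (f x) * sgn (f fun i => xor (x i) (u i)) := by
  have h : ∀ x, sgn (f fun i => xor (x i) (u i)) = ∑ β, walsh f β * (chi x β * chi u β) := by
    intro x
    rw [walsh_inversion, ← Finset.sum_congr rfl fun β _ => by rw [chi_xor]]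
  simp only [h, Finset.mul_sum]
  rw [Finset.sum_comm]
  refine Finset.sum_congr rfl fun α _ => ?_
  rw [pow_two]
  nth_rewrite 1 [walsh_eq]
  simp only [Finset.mul_sum, Finset.sum_mul]
  refine Finset.sum_congr rfl fun x _ => by ring

lemma parseval (f : (ι → Bool) → Bool) : ∑ α, walsh f α ^ 2 = 1 := by
  have h := sum_walsh_sq_chi f (fun _ => false)
  have h1 : ∀ α : ι → Bool, chi (fun _ => false) α = 1 := fun α => by simp [chi, sgn]
  simpa [h1, sgn_mul_self] using h

lemma walsh_sq_le_one (f : (ι → Bool) → Bool) (α : ι → Bool) : walsh f α ^ 2 ≤ 1 := by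
  rw [← parseval f]
  exact Finset.single_le_sum (f := fun α => walsh f α ^ 2) (fun _ _ => sq_nonneg _)
    (Finset.mem_univ α)

/-- The spectral formula for the influence of a single variable. -/
lemma influence_coord (f : (ι → Bool) → Bool) (i : ι) :
    ((Finset.univ.filter fun x : ι → Bool =>
       f x ≠ f (Function.update x i (!x i))).card : ℝ) / 2 ^ Fintype.card ι
      = ∑ α, walsh f α ^ 2 * (if α i = true then 1 else 0) := by
  have hu : ∀ x : ι → Bool,
      Function.update x i (!x i) = fun j => xor (x j) (decide (j = i)) := by
    intro x
    ext j
    by_cases h : j = i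
    · subst h; simp
    · simp [h]
  have hchi : ∀ α : ι → Bool, chi (fun j => decide (j = i)) α = sgn (α i) := by
    intro α
    rw [chi, Finset.prod_eq_single i]
    · simp
    · intro j _ hj
      simp [hj, sgn]
    · simp
  have h := sum_walsh_sq_chi f (fun j => decide (j = i))
  have h2 : ∑ α, walsh f α ^ 2 * (if α i = true then 1 else 0)
      = (∑ α, walsh f α ^ 2 - ∑ α, walsh f α ^ 2 * chi (fun j => decide (j = i)) α) / 2 := by
    rw [← Finset.sum_sub_distrib, Finset.sum_div]
    refine Finset.sum_congr rfl fun α _ => ?_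
    rw [hchi]
    cases α i <;> simp [sgn]
  rw [h2, h, parseval]
  have h3 : ∀ x, sgn (f x) * sgn (f fun j => xor (x j) (decide (j = i)))
      = 1 - 2 * (if f x ≠ f (Function.update x i (!x i)) then (1 : ℝ) else 0) := by
    intro x
    rw [hu]
    cases f x <;> cases f (fun j => xor (x j) (decide (j = i))) <;> simp [sgn] <;> norm_num
  simp only [h3, Finset.sum_sub_distrib, ← Finset.mul_sum, Finset.sum_boole]
  simp
  field_simp
  ring

lemma influence_eq (f : (ι → Bool) → Bool) :
    influence f = ∑ α, walsh f α ^ 2 * (bwt α : ℝ) := by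
  simp only [influence, influence_coord]
  rw [Finset.sum_comm]
  refine Finset.sum_congr rfl fun α _ => ?_
  rw [← Finset.mul_sum, bwt, Finset.sum_boole]

/-! ### Disjoint composition -/

/-- The Walsh transform of a disjoint composition. The factor attached to the block `i` is the
Walsh transform of `β i && g`, which is `g` if `β i = true` and the zero function otherwise. -/
lemma walsh_disjComp (f : (ι → Bool) → Bool) (g : (κ → Bool) → Bool) (α : ι × κ → Bool) :
    walsh (disjComp f g) α
      = ∑ β, walsh f β * ∏ i, walsh (fun y => β i && g y) (fun j => α (i, j)) := by
  have h1 : ∀ β : ι → Bool, ∏ i, walsh (fun y => β i && g y) (fun j => α (i, j))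
      = (2 ^ Fintype.card (ι × κ) : ℝ)⁻¹ * ∑ x : ι → κ → Bool,
          ∏ i, (sgn (β i && g (x i)) * chi (x i) fun j => α (i, j)) := by
    intro β
    simp only [walsh_eq, Finset.prod_mul_distrib]
    rw [Finset.prod_univ_sum]
    simp [Fintype.card_prod, ← pow_mul, mul_comm, Finset.prod_mul_distrib]
  have h2 : ∑ x, sgn (disjComp f g x) * chi x α
      = ∑ x : ι → κ → Bool, sgn (f fun i => g (x i)) *
          ∏ i, chi (x i) (fun j => α (i, j)) := by
    rw [← (Equiv.curry ι κ Bool).sum_comp]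
    refine Finset.sum_congr rfl fun x _ => ?_
    simp only [disjComp, chi, Fintype.prod_prod_type]
    rfl
  rw [walsh_eq, h2]
  simp only [h1, walsh_inversion f, Finset.mul_sum, Finset.sum_mul]
  rw [Finset.sum_comm]
  refine Finset.sum_congr rfl fun β _ => Finset.sum_congr rfl fun x _ => ?_
  rw [Finset.prod_mul_distrib]
  simp only [chi, Bool.and_comm]
  ring

/-- The indicator vector of the set of blocks on which `α` does not vanish. -/
def pattern (α : ι × κ → Bool) : ι → Bool := fun i => decide ((fun j => α (i, j)) ≠ fun _ => false)

lemma prod_walsh_eq_zero {σ : Type*} [Fintype σ] (g : (κ → Bool) → Bool)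
    (hg : walsh g (fun _ => false) = 0) (α : σ × κ → Bool) (β : σ → Bool) (hβ : β ≠ pattern α) :
    ∏ i, walsh (fun y => β i && g y) (fun j => α (i, j)) = 0 := by
  obtain ⟨i, hi⟩ := Function.ne_iff.mp hβ
  refine Finset.prod_eq_zero (Finset.mem_univ i) ?_
  by_cases h : (fun j => α (i, j)) = fun _ => false
  · have : β i = true := by simpa [pattern, h] using hi
    simp [this, h, hg]
  · have : β i = false := by simpa [pattern, h] using hi
    simp [this, walsh_false, h]

/-- If `W_g(0) = 0`, that is, if `g` is balanced, only one pattern contributes to each Walsh coefficient. -/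
lemma walsh_disjComp_balanced (f : (ι → Bool) → Bool) (g : (κ → Bool) → Bool)
    (hg : walsh g (fun _ => false) = 0) (α : ι × κ → Bool) :
    walsh (disjComp f g) α
      = walsh f (pattern α) * ∏ i, walsh (fun y => pattern α i && g y) (fun j => α (i, j)) := by
  rw [walsh_disjComp, Finset.sum_eq_single (pattern α)]
  · intro β _ hβ
    rw [prod_walsh_eq_zero g hg α β hβ, mul_zero]
  · simp

lemma walsh_sq_disjComp (f : (ι → Bool) → Bool) (g : (κ → Bool) → Bool)
    (hg : walsh g (fun _ => false) = 0) (α : ι × κ → Bool) :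
    walsh (disjComp f g) α ^ 2
      = ∑ β, walsh f β ^ 2 * ∏ i, walsh (fun y => β i && g y) (fun j => α (i, j)) ^ 2 := by
  rw [walsh_disjComp_balanced f g hg, Finset.sum_eq_single (pattern α)]
  · rw [mul_pow, Finset.prod_pow]
  · intro β _ hβ
    rw [Finset.prod_pow, prod_walsh_eq_zero g hg α β hβ]
    simp
  · simp

/-- Influence is multiplicative under disjoint composition with a balanced inner function. -/
lemma influence_disjComp (f : (ι → Bool) → Bool) (g : (κ → Bool) → Bool)
    (hg : walsh g (fun _ => false) = 0) :
    influence (disjComp f g) = influence f * influence g := by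
  simp only [influence, influence_coord]
  rw [Fintype.sum_prod_type, Finset.sum_mul]
  refine Finset.sum_congr rfl fun i _ => ?_
  rw [Finset.mul_sum]
  refine Finset.sum_congr rfl fun j _ => ?_
  simp only [walsh_sq_disjComp f g hg, Finset.sum_mul]
  rw [Finset.sum_comm]
  refine Finset.sum_congr rfl fun β _ => ?_
  have key : ∑ α : ι × κ → Bool,
      (∏ k, walsh (fun y => β k && g y) (fun l => α (k, l)) ^ 2) *
        (if α (i, j) = true then (1 : ℝ) else 0)
      = ∏ k, ∑ a : κ → Bool, walsh (fun y => β k && g y) a ^ 2 *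
          (if k = i then (if a j = true then (1 : ℝ) else 0) else 1) := by
    rw [Finset.prod_univ_sum, Fintype.piFinset_univ, ← (Equiv.curry ι κ Bool).sum_comp]
    refine Finset.sum_congr rfl fun α _ => ?_
    rw [Finset.prod_mul_distrib, Finset.prod_ite_eq' Finset.univ i, if_pos (Finset.mem_univ i)]
    rfl
  simp only [mul_assoc, ← Finset.mul_sum]
  rw [key, Finset.prod_eq_single i]
  · cases h : β i
    · have h0 : ∀ a : κ → Bool, walsh (fun y => false && g y) a ^ 2 *
          (if a j = true then (1 : ℝ) else 0) = 0 := by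
        intro a
        by_cases ha : a = fun _ => false
        · simp [ha]
        · simp [walsh_false, ha]
      simp only [if_true, h0, Finset.sum_const_zero]
      simp
    · simp
  · intro k _ hk
    simp only [hk, if_false, mul_one, parseval]
  · simp

end general

/-! ### The construction `palin` -/

section palindrome

variable {n : ℕ}

lemma sum_bool_cons (F : (Fin (n + 1) → Bool) → ℝ) :
    ∑ x, F x = ∑ y : Fin n → Bool, (F (Fin.cons true y) + F (Fin.cons false y)) := by
  rw [← (Fin.consEquiv fun _ => Bool).sum_comp, Fintype.sum_prod_type_right]
  refine Finset.sum_congr rfl fun y _ => ?_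
  rw [Fintype.sum_bool]
  rfl

lemma bwt_cons (a : Bool) (α : Fin n → Bool) :
    bwt (Fin.cons a α : Fin (n + 1) → Bool) = b2n a + bwt α := by
  simp only [bwt, Finset.card_filter, Fin.sum_univ_succ, Fin.cons_zero, Fin.cons_succ, b2n]

lemma b2n_bodd_iff (m : ℕ) (b : Bool) : m.bodd = b ↔ m % 2 = b2n b := by
  rw [Nat.mod_two_of_bodd]
  cases m.bodd <;> cases b <;> simp [b2n]

lemma chi_not (x α : Fin n → Bool) :
    chi (fun i => !x i) α = sgn (bwt α).bodd * chi x α := by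
  have h : chi (fun _ => true) α = sgn (bwt α).bodd := by
    have h1 : ∀ m : ℕ, sgn m.bodd = (-1) ^ m := by
      intro m
      induction m with
      | zero => simp [sgn]
      | succ m ih => rw [pow_succ, ← ih, Nat.bodd_succ]; cases m.bodd <;> simp [sgn]
    rw [h1, bwt, chi, Finset.card_filter, ← Finset.prod_pow_eq_pow_sum]
    refine Finset.prod_congr rfl fun i _ => ?_
    cases α i <;> simp [sgn]
  rw [← h, ← chi_xor]
  congr 1
  ext i
  simp

lemma walsh_palin (g : (Fin n → Bool) → Bool) (b a : Bool) (α : Fin n → Bool) :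
    walsh (palin g b) (Fin.cons a α)
      = if a = xor b (bwt α).bodd then walsh g α else 0 := by
  have hnot : ∑ x : Fin n → Bool, sgn (g fun i => !x i) * chi x α
      = sgn (bwt α).bodd * ∑ x, sgn (g x) * chi x α := by
    let e : (Fin n → Bool) ≃ (Fin n → Bool) :=
      ⟨fun x i => !x i, fun x i => !x i, fun x => by simp, fun x => by simp⟩
    rw [← e.sum_comp, Finset.mul_sum]
    refine Finset.sum_congr rfl fun x _ => ?_
    simp only [e, Equiv.coe_fn_mk, Bool.not_not, chi_not]
    ring
  have h : ∑ x, sgn (palin g b x) * chi x (Fin.cons a α : Fin (n + 1) → Bool)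
      = (1 + sgn (xor (xor b a) (bwt α).bodd)) * ∑ x, sgn (g x) * chi x α := by
    have hchi : ∀ c (x : Fin n → Bool),
        chi (Fin.cons c x : Fin (n + 1) → Bool) (Fin.cons a α : Fin (n + 1) → Bool)
          = sgn (c && a) * chi x α := by
      intro c x
      simp [chi, Fin.prod_univ_succ]
    have h0 : sgn false = 1 := by simp [sgn]
    rw [sum_bool_cons, Finset.sum_add_distrib, add_mul, one_mul, add_comm]
    simp only [hchi, palin, Fin.cons_zero, Fin.cons_succ, if_true, Bool.false_eq_true, if_false,
      Bool.true_and, Bool.false_and, sgn_xor, h0, one_mul]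
    rw [mul_assoc, ← hnot, Finset.mul_sum]
    congr 1
    refine Finset.sum_congr rfl fun x _ => by ring
  rw [walsh_eq, h, walsh_eq]
  simp only [Fintype.card_fin, pow_succ]
  cases b <;> cases a <;> cases (bwt α).bodd <;> simp [sgn] <;> ring

lemma influence_palin (g : (Fin n → Bool) → Bool) (b : Bool) :
    influence (palin g b) = influence g + eps g b := by
  rw [influence_eq, influence_eq, eps, Finset.sum_filter, ← Finset.sum_add_distrib,
    sum_bool_cons]
  refine Finset.sum_congr rfl fun α _ => ?_
  simp only [walsh_palin, bwt_cons, ← b2n_bodd_iff]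
  cases b <;> cases (bwt α).bodd <;> simp [b2n] <;> ring

end palindrome

/-! ### Min-entropy of the composition -/

/-- Main construction, plateaued resilient case: if `g` is balanced, plateaued,
`t`-resilient but not `(t+1)`-resilient with `t ≡ b (mod 2)`, then
`H_∞(G_b)/Inf(G_b) = (H_∞(g)/Inf(g))·((t+3)/(Inf(g)+ε_b(g)))`. -/
theorem stmt10 {n : ℕ} (hn : 0 < n) (g : (Fin n → Bool) → Bool) (hg : balanced g)
    (b : Bool) (t : ℕ) (hparity : t % 2 = b2n b) (hplat : plateaued g)
    (hres : resilient g t) (hnres : ¬resilient g (t + 1)) :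
    minEntropy (disjComp (palin g b) g) / influence (disjComp (palin g b) g) =
      minEntropy g / influence g * ((t + 3 : ℝ) / (influence g + eps g b)) := by
  obtain ⟨c, hc⟩ := hplat
  have hg0 : walsh g (fun _ => false) = 0 := hres _ (by simp [bwt])
  have hsq : ∀ α, walsh g α ≠ 0 → walsh g α ^ 2 = c ^ 2 := by
    intro α hα
    rcases hc α with h | h | h
    · exact absurd h hα
    · rw [h]
    · rw [h, neg_sq]
  -- A Walsh support point of least weight, which is `t + 1`.
  obtain ⟨γ, hγt, hγ⟩ : ∃ γ, bwt γ ≤ t + 1 ∧ walsh g γ ≠ 0 := by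
    simpa [resilient] using hnres
  have hγw : bwt γ = t + 1 := by
    have : ¬ bwt γ ≤ t := fun h => hγ (hres γ h)
    omega
  have hγ0 : γ ≠ fun _ => false := fun h => hγ (h ▸ hg0)
  set L : ℝ := Real.logb 2 (1 / c ^ 2) with hL
  have hLnn : 0 ≤ L := by
    have hpos : 0 < c ^ 2 := by rw [← hsq γ hγ]; positivity
    have hle : c ^ 2 ≤ 1 := by rw [← hsq γ hγ]; exact walsh_sq_le_one g γ
    exact Real.logb_nonneg (by norm_num) (by rw [le_div_iff₀ hpos]; simpa using hle)
  have hHg : minEntropy g = L := by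
    refine IsLeast.csInf_eq ⟨⟨γ, hγ, by rw [hsq γ hγ]⟩, ?_⟩
    rintro y ⟨α, hα, rfl⟩
    rw [hsq α hα]
  -- The Walsh support of `palin g b` has minimum weight `t + 2`: a support point `β` of `g` gets
  -- the extra bit `b ⊕ wt β`, which is `1` when `wt β = t + 1`.
  have hpal : ∀ β, walsh (palin g b) β ≠ 0 →
      t + 2 ≤ bwt β ∧ walsh (palin g b) β ^ 2 = c ^ 2 := by
    intro β hβ
    rw [← Fin.cons_self_tail β, walsh_palin] at hβ ⊢
    split_ifs at hβ ⊢ with h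
    · refine ⟨?_, hsq _ hβ⟩
      have h1 : ¬ bwt (Fin.tail β) ≤ t := fun h => hβ (hres _ h)
      rw [bwt_cons]
      by_cases h2 : bwt (Fin.tail β) = t + 1
      · rw [h2, Nat.bodd_succ, (b2n_bodd_iff t b).2 hparity] at h
        rw [h]
        cases b <;> simp [b2n] <;> omega
      · omega
    · exact absurd rfl hβ
  -- On the Walsh support of the composition, the entropy is governed by the number of
  -- nonzero blocks.
  have hval : ∀ α, walsh (disjComp (palin g b) g) α ≠ 0 →
      Real.logb 2 (1 / walsh (disjComp (palin g b) g) α ^ 2) = (bwt (pattern α) + 1) * L := by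
    intro α hα
    rw [walsh_disjComp_balanced _ _ hg0] at hα ⊢
    have hα1 := left_ne_zero_of_mul hα
    have hα2 := Finset.prod_ne_zero_iff.1 (right_ne_zero_of_mul hα)
    have hprod : ∏ i, walsh (fun y => pattern α i && g y) (fun j => α (i, j)) ^ 2
        = (c ^ 2) ^ bwt (pattern α) := by
      rw [bwt, ← Finset.prod_const, Finset.prod_filter]
      refine Finset.prod_congr rfl fun i _ => ?_
      have h := hα2 i (Finset.mem_univ i)
      cases hp : pattern α i
      · have h0 : (fun j => α (i, j)) = fun _ => false := by simpa [pattern] using hp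
        simp [walsh_false, h0]
      · simp only [hp, Bool.true_and] at h
        simpa using hsq _ h
    rw [mul_pow, ← Finset.prod_pow, hprod, (hpal _ hα1).2, ← pow_succ', ← one_div_pow,
      Real.logb_pow]
    push_cast
    rfl
  have hHG : minEntropy (disjComp (palin g b) g) = (t + 3) * L := by
    refine IsLeast.csInf_eq ⟨?_, ?_⟩
    · -- The minimum is attained by placing `γ` in each block of the support point `(1, γ)`.
      let δ : Fin (n + 1) → Bool := Fin.cons true γ
      let α : Fin (n + 1) × Fin n → Bool := fun p => δ p.1 && γ p.2
      have hpat : pattern α = δ := by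
        ext i
        cases h : δ i
        · simp [pattern, α, h]
        · simpa [pattern, α, h] using hγ0
      have hδ : walsh (palin g b) δ ≠ 0 := by
        have : (bwt γ).bodd = !b := by
          rw [hγw, Nat.bodd_succ, (b2n_bodd_iff t b).2 hparity]
        simpa [δ, walsh_palin, this] using hγ
      have hα : walsh (disjComp (palin g b) g) α ≠ 0 := by
        rw [walsh_disjComp_balanced _ _ hg0, hpat]
        refine mul_ne_zero hδ (Finset.prod_ne_zero_iff.2 fun i _ => ?_)
        cases h : δ i
        · simp [α, h, walsh_false]
        · simpa [α, h] using hγ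
      refine ⟨α, hα, ?_⟩
      rw [hval α hα, hpat, bwt_cons, hγw]
      simp only [b2n, if_true]
      push_cast
      ring
    · rintro y ⟨α, hα, rfl⟩
      rw [hval α hα]
      rw [walsh_disjComp_balanced _ _ hg0] at hα
      have h := (hpal _ (left_ne_zero_of_mul hα)).1
      have h' : (t : ℝ) + 2 ≤ bwt (pattern α) := by exact_mod_cast h
      exact mul_le_mul_of_nonneg_right (by linarith) hLnn
  rw [hHG, hHg, influence_disjComp _ _ hg0, influence_palin, div_mul_div_comm]
  congr 1 <;> ring
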